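/- There exist absolute constants 0 < c ≤ C such that for every θ ∈ (0,1) and every positive integer n, c · n^{(3-θ)/2} θ^{-2} (1-θ)^{-1} ≤ ∫_{A} G(s,t,u,v) ds dt du dv ≤ C · n^{(3-θ)/2} θ^{-2} (1-θ)^{-1}, where A = { (s,t,u,v) ∈ (0,∞)⁴ : 0 < u < 1, 0 < v < n^{-1/2}, s ≥ u^{1/2}, t ≥ n^{1/4} }. -/

import Mathlib

open MeasureTheory Set Real

/-- The integrand `G(s,t,u,v)` from the paper's computation of the completely 1-summing
norm of the identity `OH_n → ℓ^n_p`, with `θ = 2/p'`. Here `p = (s, t, u, v)`. -/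
noncomputable def G (θ : ℝ) (n : ℕ) (p : ℝ × ℝ × ℝ × ℝ) : ℝ :=
  (n : ℝ) ^ (2 : ℕ) * p.1 ^ (-1 - 2 * θ) * p.2.1 ^ (-1 - 2 * θ) *
    min (min (min ((n : ℝ)⁻¹ * p.1 ^ (4 : ℝ) * p.2.2.1 ^ (-2 : ℝ) * p.2.2.2 ^ (-2 : ℝ))
                  ((n : ℝ)⁻¹ * p.2.1 ^ (4 : ℝ)))
             (min (p.1 ^ (4 : ℝ) * p.2.2.1 ^ (-2 : ℝ)) (p.2.1 ^ (4 : ℝ) * p.2.2.2 ^ (-2 : ℝ))))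
        (min (min (p.2.2.1 ^ (-2 : ℝ) * p.2.2.2 ^ (-2 : ℝ)) (p.2.2.1 ^ (-2 : ℝ)))
             (min 1 (p.2.2.2 ^ (-2 : ℝ))))

/-- The region of integration. -/
def A (n : ℕ) : Set (ℝ × ℝ × ℝ × ℝ) :=
  {p | 0 < p.1 ∧ 0 < p.2.1 ∧ 0 < p.2.2.1 ∧ 0 < p.2.2.2 ∧ p.2.2.1 < 1 ∧ p.2.2.2 < (n : ℝ) ^ (-(1/2) : ℝ) ∧ p.2.2.1 ^ ((1:ℝ)/2) ≤ p.1 ∧ (n : ℝ) ^ ((1:ℝ)/4) ≤ p.2.1}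

lemma lint_Ici (θ : ℝ) (h0 : 0 < θ) (c : ℝ) (hc : 0 < c) :
    ∫⁻ s, (Ici c).indicator (fun s : ℝ => ENNReal.ofReal (s ^ (-1 - 2 * θ))) s
      = ENNReal.ofReal (c ^ (-2 * θ) / (2 * θ)) := by
  rw [lintegral_indicator measurableSet_Ici, setLIntegral_congr Ioi_ae_eq_Ici.symm,
    ← ofReal_integral_eq_lintegral_ofReal]
  · rw [integral_Ioi_rpow_of_lt (by linarith) hc]
    congr 1
    rw [show -1 - 2 * θ + 1 = -2 * θ by ring, neg_mul, div_neg, neg_div, neg_neg]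
  · exact integrableOn_Ioi_rpow_of_lt (by linarith) hc
  · filter_upwards [ae_restrict_mem measurableSet_Ioi] with x hx
    exact rpow_nonneg (hc.le.trans (le_of_lt hx)) _

lemma lint_u (θ : ℝ) (h0 : 0 < θ) (h1 : θ < 1) :
    ∫⁻ u, (Ioo (0:ℝ) 1).indicator (fun u : ℝ => ENNReal.ofReal (u ^ (-θ) / (2 * θ))) u
      = ENNReal.ofReal (1 / (2 * θ * (1 - θ))) := by
  have hi : IntervalIntegrable (fun u : ℝ => u ^ (-θ)) volume 0 1 :=
    intervalIntegral.intervalIntegrable_rpow' (by linarith)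
  rw [lintegral_indicator measurableSet_Ioo, setLIntegral_congr Ioo_ae_eq_Ioc,
    ← ofReal_integral_eq_lintegral_ofReal]
  · rw [← intervalIntegral.integral_of_le zero_le_one, intervalIntegral.integral_div,
      integral_rpow (Or.inl (by linarith)), one_rpow, zero_rpow (by linarith)]
    congr 1
    have : 1 - θ ≠ 0 := by linarith
    rw [show -θ + 1 = 1 - θ by ring]
    field_simp
    ring
  · exact ((intervalIntegrable_iff_integrableOn_Ioc_of_le zero_le_one).1 hi).div_const _
  · filter_upwards [ae_restrict_mem measurableSet_Ioc] with x hx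
    exact div_nonneg (rpow_nonneg hx.1.le _) (by positivity)

/-- The part of the region that couples `s` and `u`. -/
def SU : Set (ℝ × ℝ) := {q | 0 < q.2 ∧ q.2 < 1 ∧ q.2 ^ ((1:ℝ)/2) ≤ q.1}

lemma SU_meas : MeasurableSet SU := by
  unfold SU
  refine (measurableSet_lt measurable_const measurable_snd).inter
    ((measurableSet_lt measurable_snd measurable_const).inter
    (measurableSet_le (by fun_prop) measurable_fst))

lemma A_meas (n : ℕ) : MeasurableSet (A n) := by
  unfold A
  simp only [setOf_and]
  repeat' apply MeasurableSet.inter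
  all_goals first
    | exact measurableSet_lt (by fun_prop) (by fun_prop)
    | exact measurableSet_le (by fun_prop) (by fun_prop)

/-- The `(s,u)` factor. -/
noncomputable def gSU (θ : ℝ) : ℝ × ℝ → ENNReal :=
  SU.indicator (fun q => ENNReal.ofReal (q.1 ^ (-1 - 2 * θ)))

lemma gSU_meas (θ : ℝ) : Measurable (gSU θ) :=
  Measurable.indicator (by fun_prop) SU_meas

lemma lint_g (θ : ℝ) (h0 : 0 < θ) (h1 : θ < 1) :
    ∫⁻ s, ∫⁻ u, gSU θ (s, u) = ENNReal.ofReal (1 / (2 * θ * (1 - θ))) := by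
  rw [lintegral_lintegral_swap (f := fun s u => gSU θ (s, u)) (gSU_meas θ).aemeasurable, ← lint_u θ h0 h1]
  refine lintegral_congr fun u => ?_
  by_cases hu : u ∈ Ioo (0:ℝ) 1
  · rw [indicator_of_mem hu]
    have := lint_Ici θ h0 (u ^ ((1:ℝ)/2)) (rpow_pos_of_pos hu.1 _)
    rw [← rpow_mul hu.1.le, show (1:ℝ)/2 * (-2 * θ) = -θ by ring] at this
    rw [← this]
    refine lintegral_congr fun s => ?_
    by_cases hs : u ^ ((1:ℝ)/2) ≤ s
    · rw [indicator_of_mem (show s ∈ Ici _ from hs), gSU,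
        indicator_of_mem (show (s, u) ∈ SU from ⟨hu.1, hu.2, hs⟩)]
    · rw [indicator_of_notMem (show s ∉ Ici _ from hs), gSU,
        indicator_of_notMem (fun h : (s, u) ∈ SU => hs h.2.2)]
  · rw [indicator_of_notMem hu]
    refine (lintegral_congr fun s => ?_).trans lintegral_zero
    rw [gSU, indicator_of_notMem (fun h : (s, u) ∈ SU => hu ⟨h.1, h.2.1⟩)]

lemma G_eq (θ : ℝ) (n : ℕ) (hn : 0 < n) (p : ℝ × ℝ × ℝ × ℝ) (hp : p ∈ A n) :
    G θ n p = (n:ℝ) ^ 2 * p.1 ^ (-1 - 2 * θ) * p.2.1 ^ (-1 - 2 * θ) := by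
  obtain ⟨s, t, u, v⟩ := p
  obtain ⟨hs, ht, hu, hv, hu1, hv1, hsu, htn⟩ := hp
  simp only at hs ht hu hv hu1 hv1 hsu htn
  have hn1 : (1:ℝ) ≤ n := by exact_mod_cast hn
  have hn0 : (0:ℝ) < n := by linarith
  have e1 : 1 ≤ s ^ (4:ℝ) * u ^ (-2:ℝ) := by
    have := rpow_le_rpow (rpow_nonneg hu.le _) hsu (show (0:ℝ) ≤ 4 by norm_num)
    rw [← rpow_mul hu.le, show (1:ℝ)/2*4 = 2 by norm_num] at this
    rw [rpow_neg hu.le, ← div_eq_mul_inv, one_le_div (by positivity)]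
    exact this
  have e2 : 1 ≤ (n:ℝ)⁻¹ * t ^ (4:ℝ) := by
    have := rpow_le_rpow (rpow_nonneg hn0.le _) htn (show (0:ℝ) ≤ 4 by norm_num)
    rw [← rpow_mul hn0.le, show (1:ℝ)/4*4 = 1 by norm_num, rpow_one] at this
    rw [mul_comm, ← div_eq_mul_inv, one_le_div hn0]
    exact this
  have e3 : 1 ≤ (n:ℝ)⁻¹ * v ^ (-2:ℝ) := by
    have := rpow_le_rpow hv.le hv1.le (show (0:ℝ) ≤ 2 by norm_num)
    rw [← rpow_mul hn0.le, show (-(1/2):ℝ)*2 = -1 by norm_num, rpow_neg_one] at this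
    rw [rpow_neg hv.le, ← div_eq_mul_inv, one_le_div (by positivity)]
    exact this
  have hni : (n:ℝ)⁻¹ ≤ 1 := inv_le_one_of_one_le₀ hn1
  have e4 : 1 ≤ v ^ (-2:ℝ) :=
    e3.trans (mul_le_of_le_one_left (by positivity) hni)
  have e5 : 1 ≤ u ^ (-2:ℝ) := one_le_rpow_of_pos_of_le_one_of_nonpos hu hu1.le (by norm_num)
  have e6 : 1 ≤ t ^ (4:ℝ) := e2.trans (mul_le_of_le_one_left (by positivity) hni)
  have e7 : 1 ≤ (n:ℝ)⁻¹ * s ^ (4:ℝ) * u ^ (-2:ℝ) * v ^ (-2:ℝ) := by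
    have := one_le_mul_of_one_le_of_one_le e1 e3
    calc _ ≤ _ := this
      _ = _ := by ring
  have e8 := one_le_mul_of_one_le_of_one_le e6 e4
  have e9 := one_le_mul_of_one_le_of_one_le e5 e4
  unfold G
  simp only
  rw [min_eq_left e4, min_eq_right (le_min e9 e5),
    min_eq_right (le_min (le_min e7 e2) (le_min e1 e8)), mul_one]

lemma int_eq (θ : ℝ) (h0 : 0 < θ) (h1 : θ < 1) (n : ℕ) (hn : 0 < n) :
    ∫ p in A n, G θ n p =
      1/4 * ((n : ℝ) ^ ((3 - θ) / 2) * θ ^ (-2 : ℝ) * (1 - θ) ^ (-1 : ℝ)) := by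
  have hn0 : (0:ℝ) < n := by exact_mod_cast hn
  have h1' : 0 < 1 - θ := by linarith
  set a : ℝ → ENNReal :=
    (Ici ((n:ℝ) ^ ((1:ℝ)/4))).indicator (fun s : ℝ => ENNReal.ofReal (s ^ (-1 - 2 * θ))) with ha
  set b : ℝ → ENNReal := (Ioo (0:ℝ) ((n:ℝ) ^ (-(1/2):ℝ))).indicator (fun _ => 1) with hb
  have am : Measurable a := Measurable.indicator (by fun_prop) measurableSet_Ici
  have bm : Measurable b := Measurable.indicator (by fun_prop) measurableSet_Ioo
  have gm := gSU_meas θ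
  have hA : ∫⁻ t, a t = ENNReal.ofReal ((n:ℝ) ^ (-θ/2) / (2 * θ)) := by
    rw [ha, lint_Ici θ h0 _ (by positivity), ← rpow_mul hn0.le]
    congr 3; ring
  have hB : ∫⁻ v, b v = ENNReal.ofReal ((n:ℝ) ^ (-(1/2):ℝ)) := by
    rw [hb, lintegral_indicator measurableSet_Ioo]; simp
  rw [setIntegral_congr_fun (A_meas n) (fun p hp => G_eq θ n hn p hp),
    integral_eq_lintegral_of_nonneg_ae]
  rotate_left
  · filter_upwards [ae_restrict_mem (A_meas n)] with p hp
    have := hp.1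
    have := hp.2.1
    show (0:ℝ) ≤ _
    positivity
  · exact Measurable.aestronglyMeasurable (by fun_prop)
  rw [← lintegral_indicator (A_meas n)]
  have key : ∀ p : ℝ × ℝ × ℝ × ℝ, (A n).indicator (fun p : ℝ × ℝ × ℝ × ℝ => ENNReal.ofReal
      ((n:ℝ) ^ 2 * p.1 ^ (-1 - 2 * θ) * p.2.1 ^ (-1 - 2 * θ))) p =
      ENNReal.ofReal ((n:ℝ)^2) * (a p.2.1 * (gSU θ (p.1, p.2.2.1) * b p.2.2.2)) := by
    rintro ⟨s, t, u, v⟩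
    by_cases hp : (s, t, u, v) ∈ A n
    · rw [indicator_of_mem hp]
      obtain ⟨hs, ht, hu, hv, hu1, hv1, hsu, htn⟩ := hp
      simp only at hs ht hu hv hu1 hv1 hsu htn
      simp only [ha, hb, gSU]
      rw [indicator_of_mem (show t ∈ Ici _ from htn),
        indicator_of_mem (show (s, u) ∈ SU from ⟨hu, hu1, hsu⟩),
        indicator_of_mem (show v ∈ Ioo _ _ from ⟨hv, hv1⟩), ENNReal.ofReal_mul (by positivity),
        ENNReal.ofReal_mul (by positivity)]
      ring
    · rw [indicator_of_notMem hp]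
      by_cases h1 : t ∈ Ici ((n:ℝ) ^ ((1:ℝ)/4))
      · by_cases h2 : (s, u) ∈ SU
        · by_cases h3 : v ∈ Ioo (0:ℝ) ((n:ℝ) ^ (-(1/2):ℝ))
          · exfalso
            refine hp ⟨(rpow_pos_of_pos h2.1 _).trans_le h2.2.2,
              (rpow_pos_of_pos hn0 _).trans_le h1, h2.1, h3.1, h2.2.1, h3.2, h2.2.2, h1⟩
          · simp only [hb, indicator_of_notMem h3, mul_zero]
        · simp only [gSU, indicator_of_notMem h2, mul_zero, zero_mul]
      · simp only [ha, indicator_of_notMem h1, mul_zero, zero_mul]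
  rw [lintegral_congr key, lintegral_const_mul _ (by fun_prop),
    Measure.volume_eq_prod, lintegral_prod _ (by fun_prop)]
  have step : ∀ s : ℝ, ∫⁻ q : ℝ × ℝ × ℝ, a q.1 * (gSU θ (s, q.2.1) * b q.2.2) =
      (∫⁻ t, a t) * ((∫⁻ u, gSU θ (s, u)) * ∫⁻ v, b v) := by
    intro s
    rw [Measure.volume_eq_prod, lintegral_prod_mul (f := a)
      (g := fun r : ℝ × ℝ => gSU θ (s, r.1) * b r.2) am.aemeasurable (by fun_prop),
      Measure.volume_eq_prod, lintegral_prod_mul (f := fun u => gSU θ (s, u))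
      (g := b) (by fun_prop) bm.aemeasurable]
  have gm2 : Measurable fun s => ∫⁻ u, gSU θ (s, u) := gm.lintegral_prod_right'
  rw [lintegral_congr step, lintegral_const_mul _ (by fun_prop), lintegral_mul_const _ gm2,
    lint_g θ h0 h1, hA, hB, ← ENNReal.ofReal_mul (by positivity), ← ENNReal.ofReal_mul (by positivity),
    ← ENNReal.ofReal_mul (by positivity), ENNReal.toReal_ofReal (by positivity)]
  have e : (n:ℝ) ^ ((3 - θ) / 2) = (n:ℝ)^2 * (n:ℝ) ^ (-θ/2) * (n:ℝ) ^ (-(1/2):ℝ) := by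
    rw [← rpow_natCast, ← rpow_add hn0, ← rpow_add hn0]
    congr 1; push_cast; ring
  rw [e, rpow_neg_one, rpow_neg h0.le, show (2:ℝ) = ((2:ℕ):ℝ) by norm_num, rpow_natCast]
  push_cast
  field_simp
  norm_num

theorem stmt_4 :
    ∃ c C : ℝ, 0 < c ∧ c ≤ C ∧ ∀ θ : ℝ, 0 < θ → θ < 1 → ∀ n : ℕ, 0 < n →
      c * ((n : ℝ) ^ ((3 - θ) / 2) * θ ^ (-2 : ℝ) * (1 - θ) ^ (-1 : ℝ)) ≤ (∫ p in A n, G θ n p) ∧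
      (∫ p in A n, G θ n p) ≤ C * ((n : ℝ) ^ ((3 - θ) / 2) * θ ^ (-2 : ℝ) * (1 - θ) ^ (-1 : ℝ)) := by
  refine ⟨1/4, 1/4, by norm_num, le_rfl, fun θ h0 h1 n hn => ?_⟩
  rw [int_eq θ h0 h1 n hn]
  exact ⟨le_rfl, le_rfl⟩
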